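/- arXiv:2207.09681 — 2 statements merged into one kernel-verified Lean document; each statement's English description precedes it below -/
import Mathlib

section
/- Let T be a tree. Then φ(K1∇T) = ⌊v(T)/2⌋. -/
open scoped Classical

namespace PaperEDC

/-- `G` contains `m` pairwise edge-disjoint cycles. -/
def HasEDC {V : Type*} (G : SimpleGraph V) (m : ℕ) : Prop :=
  ∃ c : Fin m → Σ v : V, G.Walk v v,
    (∀ i, (c i).2.IsCycle) ∧
    ∀ i j, i ≠ j → ∀ e ∈ (c i).2.edges, e ∉ (c j).2.edges

/-- `φ(G)`: the maximum number of pairwise edge-disjoint cycles in `G`. -/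
noncomputable def phi {V : Type*} (G : SimpleGraph V) : ℕ := sSup {m | HasEDC G m}

/-- `K₁ ∇ H`: the join of a single new vertex with `H`. -/
def joinK1 {V : Type*} (H : SimpleGraph V) : SimpleGraph (Option V) :=
  SimpleGraph.fromRel fun a b => a = none ∨ ∃ u v, a = some u ∧ b = some v ∧ H.Adj u v

/-- `t(G)`: the number of triangles of `G`. -/
noncomputable def triCount {V : Type*} (G : SimpleGraph V) : ℕ :=
  Nat.card {s : Finset V // G.IsNClique 3 s}

/-- A triangle-cactus: a connected graph in which every edge lies on a cycle and every
cycle is a triangle. -/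
def IsTriangleCactus {V : Type*} (G : SimpleGraph V) : Prop :=
  G.Connected ∧
  (∀ e ∈ G.edgeSet, ∃ (v : V) (w : G.Walk v v), w.IsCycle ∧ e ∈ w.edges) ∧
  ∀ (v : V) (w : G.Walk v v), w.IsCycle → w.length = 3

/-- `e(G)`: the number of edges of `G`. -/
noncomputable def ecard {V : Type*} (G : SimpleGraph V) : ℕ := Nat.card G.edgeSet

/-- `ρ(G)`: the spectral radius (largest adjacency eigenvalue) of `G`. -/
noncomputable def specRad {V : Type*} [Fintype V] (G : SimpleGraph V) : ℝ :=
  sSup {x : ℝ | ∃ f : V → ℝ, f ≠ 0 ∧ ∀ v : V, ∑ u : V, (if G.Adj v u then f u else 0) = x * f v}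

theorem joinK1_adj_none {V : Type*} (H : SimpleGraph V) (u : V) :
    (joinK1 H).Adj none (some u) := by
  simp [joinK1, SimpleGraph.fromRel_adj]

theorem joinK1_adj_some {V : Type*} (H : SimpleGraph V) (u v : V) :
    (joinK1 H).Adj (some u) (some v) ↔ H.Adj u v := by
  simp only [joinK1, SimpleGraph.fromRel_adj]
  constructor
  · rintro ⟨-, h⟩
    rcases h with (h | ⟨a, b, ha, hb, h⟩) | (h | ⟨a, b, ha, hb, h⟩)
    · cases h
    · cases ha; cases hb; exact h
    · cases h
    · cases ha; cases hb; exact h.symm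
  · intro h
    exact ⟨fun e => h.ne (Option.some.inj e), Or.inl (Or.inr ⟨u, v, rfl, rfl, h⟩)⟩

theorem none_mem_cycle {V : Type*} (T : SimpleGraph V) (hT : T.IsAcyclic) {v : Option V}
    (w : (joinK1 T).Walk v v) (hw : w.IsCycle) : none ∈ w.support := by
  by_contra hn
  have hs : ∀ x ∈ w.support, x ∈ ({none}ᶜ : Set (Option V)) := by
    intro x hx h
    rw [Set.mem_singleton_iff] at h
    exact hn (h ▸ hx)
  have hg : ∀ x : ({none}ᶜ : Set (Option V)), ∃ u, x.1 = some u := by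
    rintro ⟨x, hx⟩
    cases x with
    | none => exact absurd rfl hx
    | some u => exact ⟨u, rfl⟩
  choose g hg using hg
  let F : (joinK1 T).induce ({none}ᶜ : Set (Option V)) →g T :=
    ⟨g, by
      intro a b h
      have h' : (joinK1 T).Adj a.1 b.1 := h
      rw [hg a, hg b, joinK1_adj_some] at h'
      exact h'⟩
  have hF : Function.Injective F := by
    intro a b h
    have h' : g a = g b := h
    apply Subtype.ext
    rw [hg a, hg b, h']
  have hac : ((joinK1 T).induce ({none}ᶜ : Set (Option V))).IsAcyclic := hT.comap F hF
  refine hac (w.induce _ hs) ?_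
  rw [← SimpleGraph.Walk.isCycle_map_iff_of_injective
    (f := (SimpleGraph.Embedding.induce (G := joinK1 T) _).toHom)
    (SimpleGraph.Embedding.induce (G := joinK1 T) _).injective]
  rw [SimpleGraph.Walk.map_induce]
  exact hw

theorem upper {V : Type*} [Fintype V] (T : SimpleGraph V) (hT : T.IsAcyclic) (m : ℕ)
    (h : HasEDC (joinK1 T) m) : m ≤ Fintype.card V / 2 := by
  obtain ⟨c, hc, hd⟩ := h
  let N : Fin m → Finset (Option V) := fun i => ((c i).2.toSubgraph.neighborSet none).toFinset
  have hN : ∀ i, (N i).card = 2 := by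
    intro i
    rw [← Set.ncard_eq_toFinset_card']
    exact (hc i).ncard_neighborSet_toSubgraph_eq_two (none_mem_cycle T hT _ (hc i))
  have hdis : ((Finset.univ : Finset (Fin m)) : Set (Fin m)).PairwiseDisjoint N := by
    intro i _ j _ hij
    refine Finset.disjoint_left.2 ?_
    intro x hx hy
    simp only [N, Set.mem_toFinset, SimpleGraph.Subgraph.mem_neighborSet,
      SimpleGraph.Walk.adj_toSubgraph_iff_mem_edges] at hx hy
    exact hd i j hij _ hx hy
  have hsub : Finset.univ.biUnion N ⊆ Finset.univ.erase none := by
    intro x hx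
    simp only [Finset.mem_biUnion, N, Set.mem_toFinset] at hx
    obtain ⟨i, -, hi⟩ := hx
    have := SimpleGraph.Subgraph.Adj.ne hi
    simp [this.symm]
  have h1 := Finset.card_le_card hsub
  rw [Finset.card_biUnion (fun i hi j hj hij => hdis hi hj hij)] at h1
  simp [hN] at h1
  omega

theorem split_edge {V : Type*} {G : SimpleGraph V} (hG : G.Connected) {u v : V} (p : G.Walk u v)
    (hp : p.length = G.dist u v) {a b : V} (he : s(a, b) ∈ p.edges) :
    G.dist u a + 1 + G.dist b v ≤ G.dist u v ∨ G.dist u b + 1 + G.dist a v ≤ G.dist u v := by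
  rw [← hp]
  clear hp
  induction p with
  | nil => simp at he
  | @cons x y z hxy q ih =>
    rw [SimpleGraph.Walk.edges_cons, List.mem_cons] at he
    rw [SimpleGraph.Walk.length_cons]
    have h1 : G.dist x y ≤ 1 := (SimpleGraph.dist_eq_one_iff_adj.2 hxy).le
    have hq := SimpleGraph.dist_le q
    rcases he with he | he
    · rw [Sym2.eq_iff] at he
      rcases he with ⟨rfl, rfl⟩ | ⟨rfl, rfl⟩
      · left; simp; omega
      · right; simp; omega
    · have ta := hG.dist_triangle (u := x) (v := y) (w := a)
      have tb := hG.dist_triangle (u := x) (v := y) (w := b)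
      rcases ih he with h | h
      · left; omega
      · right; omega

theorem sum_lt_of_two {m : ℕ} (g g' : Fin m → ℕ) (i j : Fin m) (hij : i ≠ j)
    (h : ∀ k, k ≠ i → k ≠ j → g' k = g k) (hlt : g' i + g' j < g i + g j) :
    ∑ k, g' k < ∑ k, g k := by
  have hj : j ∈ Finset.univ.erase i := by simp [hij.symm]
  rw [← Finset.add_sum_erase _ g (Finset.mem_univ i), ← Finset.add_sum_erase _ g hj,
    ← Finset.add_sum_erase _ g' (Finset.mem_univ i), ← Finset.add_sum_erase _ g' hj]
  have : ∑ k ∈ (Finset.univ.erase i).erase j, g' k = ∑ k ∈ (Finset.univ.erase i).erase j, g k := by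
    refine Finset.sum_congr rfl ?_
    intro k hk
    simp at hk
    exact h k hk.2 hk.1
  omega

theorem pairing {V : Type*} [Fintype V] {G : SimpleGraph V} (hG : G.Connected) (m : ℕ)
    (hm : 2 * m ≤ Fintype.card V) :
    ∃ (f : Fin m × Bool ↪ V) (p : ∀ i, G.Walk (f (i, false)) (f (i, true))),
      (∀ i, (p i).IsPath) ∧ ∀ i j, i ≠ j → ∀ e ∈ (p i).edges, e ∉ (p j).edges := by
  have hne : Nonempty (Fin m × Bool ↪ V) := by
    apply Function.Embedding.nonempty_of_card_le
    simp; omega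
  obtain ⟨f, hf⟩ := Finite.exists_min
    (fun f : Fin m × Bool ↪ V => ∑ i, G.dist (f (i, false)) (f (i, true)))
  have hp : ∀ i, ∃ p : G.Walk (f (i, false)) (f (i, true)), p.IsPath ∧
      p.length = G.dist (f (i, false)) (f (i, true)) :=
    fun i => hG.exists_path_of_dist _ _
  choose p hp hl using hp
  refine ⟨f, p, hp, ?_⟩
  intro i j hij e
  induction e with
  | _ a b =>
  intro hi hj
  have key : ∀ t : Bool, G.dist (f (i, false)) (f (j, t)) + G.dist (f (i, true)) (f (j, !t)) <
      G.dist (f (i, false)) (f (i, true)) + G.dist (f (j, false)) (f (j, true)) → False := by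
    intro t ht
    have := hf ((Equiv.swap (i, true) (j, t)).toEmbedding.trans f)
    refine absurd this (not_le.2 (sum_lt_of_two _ _ i j hij ?_ ?_))
    · intro k hki hkj
      simp [Equiv.swap_apply_def, hki, hkj]
    · cases t
      · simpa [Equiv.swap_apply_def, hij, hij.symm] using ht
      · simpa [Equiv.swap_apply_def, hij, hij.symm, G.dist_comm] using ht
  have k1 := key false
  have k2 := key true
  simp only [Bool.not_false, Bool.not_true] at k1 k2
  have t1 := fun x y z => hG.dist_triangle (u := x) (v := y) (w := z)
  have c := fun x y => G.dist_comm (u := x) (v := y)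
  have A := split_edge hG (p i) (hl i) hi
  have B := split_edge hG (p j) (hl j) hj
  clear hi hj hl hp p hf key
  generalize f (i, false) = ui at *
  generalize f (i, true) = vi at *
  generalize f (j, false) = uj at *
  generalize f (j, true) = vj at *
  have := c ui a; have := c ui b; have := c uj a; have := c uj b
  have := c vi a; have := c vi b; have := c vj a; have := c vj b
  have := t1 ui a uj; have := t1 ui b uj; have := t1 ui a vj; have := t1 ui b vj
  have := t1 vi a uj; have := t1 vi b uj; have := t1 vi a vj; have := t1 vi b vj
  by_cases q1 : G.dist ui uj + G.dist vi vj < G.dist ui vi + G.dist uj vj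
  · exact k1 q1
  by_cases q2 : G.dist ui vj + G.dist vi uj < G.dist ui vi + G.dist uj vj
  · exact k2 q2
  clear k1 k2 t1 c
  omega

theorem lower {V : Type*} [Fintype V] (T : SimpleGraph V) (hT : T.Connected) :
    HasEDC (joinK1 T) (Fintype.card V / 2) := by
  obtain ⟨f, p, hp, hd⟩ := pairing hT (Fintype.card V / 2) (by omega)
  let F : T →g joinK1 T := ⟨some, fun {a b} h => (joinK1_adj_some T a b).2 h⟩
  have hF : Function.Injective F := Option.some_injective V
  refine ⟨fun i => ⟨none, SimpleGraph.Walk.cons (joinK1_adj_none T (f (i, false)))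
    (((p i).map F).concat (joinK1_adj_none T (f (i, true))).symm)⟩, ?_, ?_⟩
  · intro i
    rw [SimpleGraph.Walk.cons_isCycle_iff, SimpleGraph.Walk.concat_isPath_iff]
    refine ⟨⟨SimpleGraph.Walk.map_isPath_of_injective hF (hp i), ?_⟩, ?_⟩
    · simp [F]
    · rw [SimpleGraph.Walk.edges_concat]
      simp only [List.concat_eq_append, List.mem_append, List.mem_singleton, not_or,
        SimpleGraph.Walk.edges_map, List.mem_map, not_exists, not_and]
      constructor
      · intro e _
        induction e with
        | _ a b => simp [F]
      · intro h
        have : f (i, false) = f (i, true) := by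
          simpa [F] using h
        simpa using f.injective this
  · intro i j hij e
    have hne : ∀ s t, f (i, s) ≠ f (j, t) := by
      intro s t h
      have := f.injective h
      simp [hij] at this
    simp only [SimpleGraph.Walk.edges_cons, SimpleGraph.Walk.edges_concat,
      List.concat_eq_append, List.mem_append, List.mem_cons, List.not_mem_nil, or_false,
        SimpleGraph.Walk.edges_map, List.mem_map]
    have h0 : ∀ (x : V) (e : Sym2 V), Sym2.map F e ≠ s(none, some x) := by
      intro x e
      induction e with
      | _ a b => simp [F]
    have hsw : ∀ x : V, s(F x, (none : Option V)) = s(none, some x) := fun x => Sym2.eq_swap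
    have hin : ∀ x y : V, s((none : Option V), some x) = s(none, some y) → x = y := by
      intro x y h
      simpa using h
    simp only [hsw]
    rintro (rfl | ⟨e, he, rfl⟩ | rfl) (h | ⟨e', he', h⟩ | h)
    · exact hne _ _ (hin _ _ h)
    · exact h0 _ _ h
    · exact hne _ _ (hin _ _ h)
    · exact h0 _ _ h
    · have := Sym2.map.injective hF h
      subst this
      exact hd i j hij _ he he'
    · exact h0 _ _ h
    · exact hne _ _ (hin _ _ h)
    · exact h0 _ _ h
    · exact hne _ _ (hin _ _ h)

/-- If `T` is a tree, then `φ(K₁ ∇ T) = ⌊v(T)/2⌋`. -/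
theorem phi_joinK1_tree {V : Type*} [Fintype V] (T : SimpleGraph V) (hT : T.IsTree) :
    phi (joinK1 T) = Fintype.card V / 2 := by
  have hg : IsGreatest {m | HasEDC (joinK1 T) m} (Fintype.card V / 2) :=
    ⟨lower T hT.1, fun m hm => upper T hT.2 m hm⟩
  exact hg.csSup_eq

end PaperEDC
end

section
/- Let H be a connected simple graph with at least 2 vertices, and set s = φ(K1∇H). Then v(H) ≤ 2s+1 and e(H) ≤ s(2s+1). -/
open scoped Classical

namespace PaperEDC

lemma edge_split {V : Type*} (G : SimpleGraph V) (hc : G.Connected) {a b : V}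
    (w : G.Walk a b) (e : Sym2 V) (he : e ∈ w.edges) :
    ∃ x y, e = s(x, y) ∧ G.dist a x + 1 + G.dist y b ≤ w.length := by
  induction w with
  | nil => simp at he
  | @cons u v w h p ih =>
    rw [SimpleGraph.Walk.edges_cons, List.mem_cons] at he
    rcases he with he | he
    · refine ⟨u, v, he, ?_⟩
      have := SimpleGraph.dist_le p
      simp only [SimpleGraph.dist_self, SimpleGraph.Walk.length_cons]
      omega
    · obtain ⟨x, y, h1, h3⟩ := ih he
      refine ⟨x, y, h1, ?_⟩
      have t := hc.dist_triangle (u := u) (v := v) (w := x)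
      have t2 : G.dist u v = 1 := SimpleGraph.dist_eq_one_iff_adj.2 h
      simp only [SimpleGraph.Walk.length_cons]
      omega

lemma sum_lt_two {k : ℕ} (f g : Fin k → ℕ) (i j : Fin k) (hij : i ≠ j)
    (h : ∀ l, l ≠ i → l ≠ j → f l = g l) (hlt : f i + f j < g i + g j) :
    ∑ l, f l < ∑ l, g l := by
  have key : ∀ f : Fin k → ℕ, ∑ l, f l
      = f i + (f j + ∑ l ∈ (Finset.univ.erase i).erase j, f l) := by
    intro f
    rw [Finset.add_sum_erase _ _ (by simp [hij.symm]), Finset.add_sum_erase _ _ (by simp)]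
  rw [key f, key g]
  have : ∑ l ∈ (Finset.univ.erase i).erase j, f l = ∑ l ∈ (Finset.univ.erase i).erase j, g l := by
    apply Finset.sum_congr rfl
    intro l hl
    simp only [Finset.mem_erase] at hl
    exact h l hl.2.1 hl.1
  omega

lemma exists_paths {V : Type*} (G : SimpleGraph V) (hc : G.Connected) (k : ℕ)
    (p0 : Fin k × Bool ↪ V) :
    ∃ (p : Fin k × Bool ↪ V) (w : ∀ i, G.Walk (p (i, false)) (p (i, true))),
      (∀ i, (w i).IsPath) ∧ ∀ i j, i ≠ j → ∀ e ∈ (w i).edges, e ∉ (w j).edges := by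
  obtain ⟨p, hp⟩ : ∃ p : Fin k × Bool ↪ V, ∀ q : Fin k × Bool ↪ V,
      ∑ l, G.dist (p (l, false)) (p (l, true)) ≤ ∑ l, G.dist (q (l, false)) (q (l, true)) := by
    let F : (Fin k × Bool ↪ V) → ℕ := fun q => ∑ l, G.dist (q (l, false)) (q (l, true))
    have : Nonempty (Fin k × Bool ↪ V) := ⟨p0⟩
    exact ⟨Function.argmin F, fun q => Function.argmin_le F q⟩
  have hw : ∀ i, ∃ w : G.Walk (p (i, false)) (p (i, true)), w.IsPath ∧
      w.length = G.dist (p (i, false)) (p (i, true)) :=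
    fun i => hc.exists_path_of_dist _ _
  choose w hw1 hw2 using hw
  refine ⟨p, w, hw1, ?_⟩
  intro i j hij e hei hej
  obtain ⟨x, y, he, hl⟩ := edge_split G hc _ _ hei
  obtain ⟨x', y', he', hl'⟩ := edge_split G hc _ _ hej
  rw [hw2] at hl hl'
  have tri := fun a b c => hc.dist_triangle (u := a) (v := b) (w := c)
  rw [he, Sym2.eq_iff] at he'
  rcases he' with ⟨rfl, rfl⟩ | ⟨rfl, rfl⟩
  · have := hp ((Equiv.swap (i, true) (j, false)).toEmbedding.trans p)
    refine absurd (sum_lt_two _ _ i j hij ?_ ?_) (not_lt.2 this)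
    · intro l h1 h2
      simp [Equiv.swap_apply_def, h1, h2]
    · have t1 := tri (p (i, false)) x (p (j, false))
      have t2 := tri (p (i, true)) y (p (j, true))
      rw [SimpleGraph.dist_comm (u := x)] at t1
      rw [SimpleGraph.dist_comm (u := p (i, true)) (v := y)] at t2
      simp [Equiv.swap_apply_def, hij, hij.symm]
      omega
  · have := hp ((Equiv.swap (i, true) (j, true)).toEmbedding.trans p)
    refine absurd (sum_lt_two _ _ i j hij ?_ ?_) (not_lt.2 this)
    · intro l h1 h2
      simp [Equiv.swap_apply_def, h1, h2]
    · have t1 := tri (p (i, false)) x (p (j, true))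
      have t2 := tri (p (j, false)) y (p (i, true))
      simp [Equiv.swap_apply_def, hij, hij.symm]
      omega

lemma joinK1_none {V : Type*} (H : SimpleGraph V) (a : V) : (joinK1 H).Adj none (some a) := by
  simp [joinK1]

/-- The inclusion of `H` into the join. -/
def joinHom {V : Type*} (H : SimpleGraph V) : H →g joinK1 H where
  toFun := some
  map_rel' := by
    intro a b h
    simp [joinK1, h, h.ne]

lemma joinK1_none' {V : Type*} (H : SimpleGraph V) (a : V) :
    (joinK1 H).Adj none (joinHom H a) := joinK1_none H a

lemma joinHom_apply {V : Type*} (H : SimpleGraph V) (a : V) : joinHom H a = some a := rfl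

lemma joinHom_coe {V : Type*} (H : SimpleGraph V) : (joinHom H : V → Option V) = some := rfl

/-- Close up a walk through the apex. -/
def closeUp {V : Type*} (H : SimpleGraph V) {a b : V} (w : H.Walk a b) :
    (joinK1 H).Walk none none :=
  SimpleGraph.Walk.cons (joinK1_none' H a)
    (SimpleGraph.Walk.concat (w.map (joinHom H)) (joinK1_none' H b).symm)

lemma mem_closeUp {V : Type*} (H : SimpleGraph V) {a b : V} (w : H.Walk a b)
    (e : Sym2 (Option V)) : e ∈ (closeUp H w).edges ↔
      e = s(none, some a) ∨ e = s(none, some b) ∨ ∃ f ∈ w.edges, f.map some = e := by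
  have : e = s(some b, none) ↔ e = s(none, some b) := by rw [Sym2.eq_swap]
  simp only [closeUp, SimpleGraph.Walk.edges_cons, SimpleGraph.Walk.edges_concat,
    SimpleGraph.Walk.edges_map, List.concat_eq_append, List.mem_cons, List.mem_append,
    List.mem_map, List.not_mem_nil, or_false]
  simp only [joinHom_coe]
  exact or_congr_right (or_comm.trans (or_congr_left this))

lemma map_some_ne {V : Type*} (f : Sym2 V) (a : V) : f.map some ≠ s(none, some a) := by
  induction f with
  | _ x y => simp

lemma closeUp_isCycle {V : Type*} (H : SimpleGraph V) {a b : V} (w : H.Walk a b)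
    (hw : w.IsPath) (hab : a ≠ b) : (closeUp H w).IsCycle := by
  rw [closeUp, SimpleGraph.Walk.cons_isCycle_iff]
  constructor
  · rw [SimpleGraph.Walk.concat_isPath_iff]
    refine ⟨SimpleGraph.Walk.map_isPath_of_injective (Option.some_injective V) hw, ?_⟩
    intro h
    rw [SimpleGraph.Walk.support_map, List.mem_map] at h
    obtain ⟨x, -, hx⟩ := h
    rw [joinHom_apply] at hx
    simp at hx
  · simp only [SimpleGraph.Walk.edges_concat,
      SimpleGraph.Walk.edges_map, List.concat_eq_append, List.mem_append,
      List.mem_map, List.mem_singleton]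
    rintro (⟨f, -, hf⟩ | h)
    · exact map_some_ne f a hf
    · have h2 : s(none, some a) = s(some b, none) := h
      simp at h2
      exact hab h2

lemma bdd_edc {V : Type*} [Fintype V] (G : SimpleGraph V) : BddAbove {m | HasEDC G m} := by
  refine ⟨Fintype.card (Sym2 V), ?_⟩
  rintro m ⟨c, hc, hd⟩
  have : ∀ i, ∃ e, e ∈ (c i).2.edges := by
    intro i
    apply List.exists_mem_of_ne_nil
    intro h
    have h3 := (hc i).three_le_length
    rw [← SimpleGraph.Walk.length_edges, h] at h3
    simp at h3
  choose e he using this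
  have hinj : Function.Injective e := by
    intro i j hij
    by_contra hne
    exact hd i j hne (e i) (he i) (hij ▸ he j)
  simpa using Fintype.card_le_of_injective e hinj

lemma hasEDC_join {V : Type*} [Fintype V] (H : SimpleGraph V) (hconn : H.Connected) :
    HasEDC (joinK1 H) (Fintype.card V / 2) := by
  have hn : Nonempty (Fin (Fintype.card V / 2) × Bool ↪ V) := by
    apply Function.Embedding.nonempty_of_card_le
    simp
    omega
  obtain ⟨p0⟩ := hn
  obtain ⟨p, w, hw, hd⟩ := exists_paths H hconn _ p0
  refine ⟨fun i => ⟨none, closeUp H (w i)⟩, ?_, ?_⟩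
  · intro i
    apply closeUp_isCycle _ _ (hw i)
    intro h
    simpa using p.injective h
  · intro i j hij e he he'
    simp only [mem_closeUp] at he he'
    have key : ∀ s t, p (i, s) ≠ p (j, t) := by
      intro s t h
      have := p.injective h
      simp at this
      exact hij this.1
    have key2 : ∀ s t, s((none : Option V), some (p (i, s))) ≠ s(none, some (p (j, t))) := by
      intro s t h
      simp at h
      exact hij h.1
    rcases he with rfl | rfl | ⟨f, hf, rfl⟩
    · rcases he' with h | h | ⟨g, hg, h⟩
      · exact key2 _ _ h
      · exact key2 _ _ h
      · exact map_some_ne _ _ h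
    · rcases he' with h | h | ⟨g, hg, h⟩
      · exact key2 _ _ h
      · exact key2 _ _ h
      · exact map_some_ne _ _ h
    · rcases he' with h | h | ⟨g, hg, h⟩
      · exact map_some_ne _ _ h
      · exact map_some_ne _ _ h
      · have := Sym2.map.injective (Option.some_injective V) h
        subst this
        exact hd i j hij _ hf hg

/-- If `H` is connected with at least two vertices and `s = φ(K₁ ∇ H)`, then
`v(H) ≤ 2s + 1` and `e(H) ≤ s(2s+1)`. -/
theorem card_le_of_phi_joinK1 {V : Type*} [Fintype V] (H : SimpleGraph V)
    (hconn : H.Connected) (h2 : 2 ≤ Fintype.card V) :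
    Fintype.card V ≤ 2 * phi (joinK1 H) + 1 ∧
    ecard H ≤ phi (joinK1 H) * (2 * phi (joinK1 H) + 1) := by
  have hs : Fintype.card V / 2 ≤ phi (joinK1 H) :=
    le_csSup (bdd_edc _) (hasEDC_join H hconn)
  generalize phi (joinK1 H) = s at hs
  have hV : Fintype.card V ≤ 2 * s + 1 := by omega
  refine ⟨hV, ?_⟩
  have h1 : ecard H ≤ (Fintype.card V).choose 2 := by
    have := H.card_edgeFinset_le_card_choose_two
    rw [ecard, Nat.card_eq_fintype_card, ← SimpleGraph.edgeFinset_card]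
    exact this
  have h2 : (Fintype.card V).choose 2 ≤ (2 * s + 1).choose 2 := Nat.choose_le_choose 2 hV
  have h3 : (2 * s + 1).choose 2 = s * (2 * s + 1) := by
    rw [Nat.choose_two_right]
    apply Nat.div_eq_of_eq_mul_left (by norm_num)
    simp
    ring
  omega

end PaperEDC
end
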